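/- arXiv:2411.08332 — 9 statements merged into one kernel-verified Lean document; each statement's English description precedes it below -/
import Mathlib

section
/- Let A be an m×n real matrix with nonnegative entries, b ∈ ℝⁿ with every coordinate positive, and let g : ℝᵐ → ℝ be concave on the nonnegative orthant, monotone on the nonnegative orthant, and satisfy g(0) = 0. Let α ≥ 1, β ≥ 1 and λ ∈ [0,1]. Suppose yᴼ ∈ ℝᵐ is componentwise nonnegative with Aᵀyᴼ ≤ β·b componentwise, and α·g(yᴼ) ≥ g(z) for every componentwise nonnegative z ∈ ℝᵐ with Aᵀz ≤ b. Suppose the advice y' ∈ ℝᵐ is componentwise nonnegative with Aᵀy' ≤ β·b componentwise. Then the vector ȳ := λ·yᴼ + (1−λ)·y' satisfies: (i) Aᵀȳ ≤ (2−λ)·β·b componentwise; (ii) α·g(ȳ) ≥ λ·g(z) for every componentwise nonnegative z with Aᵀz ≤ b; (iii) g(ȳ) ≥ (1−λ)·g(y'). -/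
/-- Switching algorithm for online concave packing: consistency, robustness,
and feasibility of the combined solution `ȳ = λ·yᴼ + (1−λ)·y'`. -/
theorem stmt0 (m n : ℕ) (A : Matrix (Fin m) (Fin n) ℝ)
    (hA : ∀ i j, 0 ≤ A i j) (b : Fin n → ℝ) (hb : ∀ j, 0 < b j)
    (g : (Fin m → ℝ) → ℝ)
    (hconc : ∀ u v : Fin m → ℝ, 0 ≤ u → 0 ≤ v → ∀ t : ℝ, 0 ≤ t → t ≤ 1 →
      t * g u + (1 - t) * g v ≤ g (t • u + (1 - t) • v))
    (hmono : ∀ u v : Fin m → ℝ, 0 ≤ u → u ≤ v → g u ≤ g v)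
    (hg0 : g 0 = 0)
    (α β lam : ℝ) (hα : 1 ≤ α) (hβ : 1 ≤ β) (hlam0 : 0 ≤ lam) (hlam1 : lam ≤ 1)
    (yO : Fin m → ℝ) (hyO : 0 ≤ yO) (hyOfeas : A.transpose.mulVec yO ≤ β • b)
    (hyOcomp : ∀ z : Fin m → ℝ, 0 ≤ z → A.transpose.mulVec z ≤ b → g z ≤ α * g yO)
    (y' : Fin m → ℝ) (hy' : 0 ≤ y') (hy'feas : A.transpose.mulVec y' ≤ β • b) :
    A.transpose.mulVec (lam • yO + (1 - lam) • y') ≤ ((2 - lam) * β) • b ∧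
    (∀ z : Fin m → ℝ, 0 ≤ z → A.transpose.mulVec z ≤ b →
      lam * g z ≤ α * g (lam • yO + (1 - lam) • y')) ∧
    (1 - lam) * g y' ≤ g (lam • yO + (1 - lam) • y') := by
  -- Monotonicity from `g 0 = 0` makes `g` nonnegative, so either summand of the
  -- concavity bound `key` may be dropped.
  have hO : 0 ≤ g yO := hg0 ▸ hmono 0 yO le_rfl hyO
  have h' : 0 ≤ g y' := hg0 ▸ hmono 0 y' le_rfl hy'
  have key := hconc yO y' hyO hy' lam hlam0 hlam1
  have hl : 0 ≤ 1 - lam := sub_nonneg.mpr hlam1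
  have hpO := mul_nonneg hlam0 hO
  have hp' := mul_nonneg hl h'
  refine ⟨fun j => ?_, fun z hz hzb => ?_, by linarith⟩
  · have h1 := mul_le_mul_of_nonneg_left (hyOfeas j) hlam0
    have h2 := mul_le_mul_of_nonneg_left (hy'feas j) hl
    -- The convex combination is already `β`-feasible; the slack is `(1 - lam) * β * b j`.
    have h3 : 0 ≤ (1 - lam) * (β * b j) :=
      mul_nonneg hl (mul_nonneg (by linarith) (hb j).le)
    simp only [Matrix.mulVec_add, Matrix.mulVec_smul, Pi.add_apply, Pi.smul_apply,
      smul_eq_mul] at h1 h2 ⊢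
    linarith
  · calc lam * g z ≤ lam * (α * g yO) :=
          mul_le_mul_of_nonneg_left (hyOcomp z hz hzb) hlam0
      _ = α * (lam * g yO) := by ring
      _ ≤ α * g (lam • yO + (1 - lam) • y') :=
          mul_le_mul_of_nonneg_left (by linarith) (by linarith)
end

section
/- Discrete telescoping lower bound: let T be a natural number, let x₀, x₁, …, x_T be a nondecreasing sequence of nonnegative reals with x₀ = 0, let D₁, …, D_T and e₁, …, e_T be reals with D_i ≥ D_min > 0 and e_i ≥ 0 for every i, and suppose that for every i ∈ {1,…,T}, x_i + D_i ≥ (x_{i−1} + D_i)·exp(e_i). Then x_T ≥ D_min·(exp(Σ_{i=1}^T e_i) − 1). -/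
/-!
Lowering `D i` to `Dmin` preserves the growth inequality, because `exp (e i) ≥ 1`: a smaller
shift only increases the ratio of the shifted values. Hence `x i + Dmin` grows by a factor of at
least `exp (e i)` at each step, and since `x 0 = 0` it starts at `Dmin`; induction on the number
of steps turns the product of the factors into the exponential of the sum.
-/

/-- Discrete telescoping lower bound on the primal variable in terms of the
accumulated dual mass. -/
theorem stmt5 (T : ℕ) (x D e : ℕ → ℝ) (Dmin : ℝ)
    (hx0 : x 0 = 0)
    (hmono : ∀ i, i < T → x i ≤ x (i + 1))
    (hxnn : ∀ i, i ≤ T → 0 ≤ x i)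
    (hDmin : 0 < Dmin)
    (hD : ∀ i ∈ Finset.Icc 1 T, Dmin ≤ D i)
    (he : ∀ i ∈ Finset.Icc 1 T, 0 ≤ e i)
    (hstep : ∀ i ∈ Finset.Icc 1 T, (x (i - 1) + D i) * Real.exp (e i) ≤ x i + D i) :
    Dmin * (Real.exp (∑ i ∈ Finset.Icc 1 T, e i) - 1) ≤ x T := by
  suffices h : ∀ n, n ≤ T →
      Dmin * Real.exp (∑ i ∈ Finset.Icc 1 n, e i) ≤ x n + Dmin by
    linarith [h T le_rfl]
  intro n
  induction n with
  | zero => simp [hx0]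
  | succ k ih =>
    intro hk
    have hmem : k + 1 ∈ Finset.Icc 1 T := Finset.mem_Icc.2 ⟨by omega, hk⟩
    have hs := hstep _ hmem
    rw [Nat.add_sub_cancel] at hs
    have hE : 1 ≤ Real.exp (e (k + 1)) := Real.one_le_exp (he _ hmem)
    rw [Finset.sum_Icc_succ_top (by omega), Real.exp_add, ← mul_assoc]
    have h1 := mul_le_mul_of_nonneg_right (ih (by omega)) (Real.exp_pos (e (k + 1))).le
    -- Replacing `D (k + 1)` by `Dmin` in the growth inequality costs exactly this
    -- nonnegative product.
    have h2 := mul_nonneg (sub_nonneg.2 (hD _ hmem)) (sub_nonneg.2 hE)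
    linarith
end

section
/- Primal growth-rate bound: let n and d be positive integers, λ ∈ [0,1], and let a, x, x' ∈ ℝⁿ be componentwise nonnegative vectors such that the number of indices j with a_j > 0 is at most d, and ⟨a, x⟩ < 1. Let S := { j : x_j < x'_j } and s := Σ_{j ∈ S} a_j·x'_j, and suppose s > 0. Then Σ_{j : a_j > 0} ( a_j·x_j + λ/d + (1−λ)·a_j·x'_j·𝟙[x_j < x'_j]/s ) ≤ 2. -/
/-!
The sum over the support `{j : a j > 0}` splits into three parts. The first is at most
`⟨a, x⟩ < 1` because the omitted terms are nonnegative. The second is `lam / d` times the size of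
the support, hence at most `lam` by row sparsity. The third is at most `1 - lam`, because the
advice weights `a j * x' j / s` with `x j < x' j` add up to `1` over all `j`. The total is at most
`1 + lam + (1 - lam) = 2`.
-/

/-- Primal growth-rate bound: the instantaneous rate of increase of the
primal objective is at most 2. -/
theorem stmt8 (n d : ℕ) (hn : 0 < n) (hd : 0 < d)
    (lam : ℝ) (hlam0 : 0 ≤ lam) (hlam1 : lam ≤ 1)
    (a x x' : Fin n → ℝ)
    (ha : ∀ j, 0 ≤ a j) (hx : ∀ j, 0 ≤ x j) (hx' : ∀ j, 0 ≤ x' j)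
    (hsparse : (Finset.univ.filter fun j => 0 < a j).card ≤ d)
    (hax : ∑ j, a j * x j < 1)
    (hs : 0 < ∑ j ∈ Finset.univ.filter (fun j => x j < x' j), a j * x' j) :
    ∑ j ∈ Finset.univ.filter (fun j => 0 < a j),
        (a j * x j + lam / d +
          (1 - lam) * a j * x' j * (if x j < x' j then (1 : ℝ) else 0) /
            (∑ j ∈ Finset.univ.filter (fun j => x j < x' j), a j * x' j)) ≤ 2 := by
  set s := ∑ j ∈ Finset.univ.filter (fun j => x j < x' j), a j * x' j with hs_def
  rw [Finset.sum_add_distrib, Finset.sum_add_distrib]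
  have h1 : ∑ j ∈ Finset.univ.filter (fun j => 0 < a j), a j * x j ≤ ∑ j, a j * x j :=
    Finset.sum_le_sum_of_subset_of_nonneg (Finset.filter_subset _ _)
      fun j _ _ => mul_nonneg (ha j) (hx j)
  have h2 : ∑ _j ∈ Finset.univ.filter (fun j => 0 < a j), lam / (d : ℝ) ≤ lam := by
    have hd' : (0 : ℝ) < d := by exact_mod_cast hd
    rw [Finset.sum_const, nsmul_eq_mul]
    calc ((Finset.univ.filter fun j => 0 < a j).card : ℝ) * (lam / d) ≤ d * (lam / d) := by
          gcongr
      _ = lam := by field_simp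
  have h3 : ∑ j ∈ Finset.univ.filter (fun j => 0 < a j),
      (1 - lam) * a j * x' j * (if x j < x' j then (1 : ℝ) else 0) / s ≤ 1 - lam := by
    have hlam : 0 ≤ 1 - lam := sub_nonneg.2 hlam1
    calc _ ≤ ∑ j, (1 - lam) * a j * x' j * (if x j < x' j then (1 : ℝ) else 0) / s := by
          refine Finset.sum_le_sum_of_subset_of_nonneg (Finset.filter_subset _ _) fun j _ _ => ?_
          have := ha j
          have := hx' j
          split_ifs <;> positivity
      _ = (1 - lam) * s / s := by
          rw [← Finset.sum_div, hs_def, Finset.sum_filter, Finset.mul_sum]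
          congr 1
          refine Finset.sum_congr rfl fun j _ => ?_
          split_ifs <;> ring
      _ = 1 - lam := mul_div_cancel_right₀ _ hs.ne'
  linarith
end

section
/- Bounded growth, part 1: let f : ℝⁿ → ℝ be convex on the nonnegative orthant, monotone on the nonnegative orthant, differentiable, with componentwise non-decreasing gradient (0 ≤ u ≤ v implies ∇f(u) ≤ ∇f(v) componentwise), f(0) = 0, and suppose there is a real p ≥ 1 such that ⟨x, ∇f(x)⟩ ≤ p·f(x) for all componentwise nonnegative x. Then for every real δ ≥ 1 and every componentwise nonnegative x ∈ ℝⁿ, f(δ·x) ≤ δ^p·f(x). -/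
/-!
Along the ray `t ↦ t • x` the hypothesis `⟨y, ∇f(y)⟩ ≤ p · f(y)`, taken at `y = t • x`, reads
`t · (d/dt) f(t • x) ≤ p · f(t • x)`. This says exactly that `t ↦ t ^ (-p) * f (t • x)` has
nonpositive derivative for `t > 0`, so it is antitone on `[1, ∞)`; comparing its values at `1` and
`δ` gives the bound.
-/

/-- Bounded growth, part 1: `f(δ·x) ≤ δ^p · f(x)` for `δ ≥ 1`. -/
theorem stmt10 (n : ℕ) (f : (Fin n → ℝ) → ℝ) (gradf : (Fin n → ℝ) → (Fin n → ℝ))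
    (hdiff : ∀ x : Fin n → ℝ, HasFDerivAt f
      (∑ j, gradf x j • (ContinuousLinearMap.proj j : (Fin n → ℝ) →L[ℝ] ℝ)) x)
    (hconv : ∀ u v : Fin n → ℝ, 0 ≤ u → 0 ≤ v → ∀ t : ℝ, 0 ≤ t → t ≤ 1 →
      f (t • u + (1 - t) • v) ≤ t * f u + (1 - t) * f v)
    (hmono : ∀ u v : Fin n → ℝ, 0 ≤ u → u ≤ v → f u ≤ f v)
    (hgradmono : ∀ u v : Fin n → ℝ, 0 ≤ u → u ≤ v → gradf u ≤ gradf v)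
    (hf0 : f 0 = 0)
    (p : ℝ) (hp : 1 ≤ p)
    (hpf : ∀ x : Fin n → ℝ, 0 ≤ x → ∑ j, x j * gradf x j ≤ p * f x)
    (δ : ℝ) (hδ : 1 ≤ δ) (x : Fin n → ℝ) (hx : 0 ≤ x) :
    f (δ • x) ≤ δ ^ p * f x := by
  have hder : ∀ t : ℝ, 1 ≤ t → HasDerivAt (fun t : ℝ => t ^ (-p) * f (t • x))
      ((-p) * t ^ (-p - 1) * f (t • x) + t ^ (-p) * ∑ j, gradf (t • x) j * x j) t := by
    intro t ht
    have hpow : HasDerivAt (fun t : ℝ => t ^ (-p)) ((-p) * t ^ (-p - 1)) t :=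
      Real.hasDerivAt_rpow_const (Or.inl (by linarith))
    have hray : HasDerivAt (fun t : ℝ => t • x) x t := by
      simpa using (hasDerivAt_id t).smul_const x
    have hcomp := (hdiff (t • x)).comp_hasDerivAt t hray
    have hsum : (∑ j, gradf (t • x) j • (ContinuousLinearMap.proj j : (Fin n → ℝ) →L[ℝ] ℝ)) x
        = ∑ j, gradf (t • x) j * x j := by
      simp
    rw [hsum] at hcomp
    exact hpow.mul hcomp
  have hanti : AntitoneOn (fun t : ℝ => t ^ (-p) * f (t • x)) (Set.Ici 1) := by
    refine antitoneOn_of_hasDerivWithinAt_nonpos (convex_Ici 1)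
      (fun t ht => (hder t ht).continuousAt.continuousWithinAt)
      (fun t ht => (hder t (interior_subset ht)).hasDerivWithinAt) ?_
    intro t ht
    have ht1 : (1 : ℝ) ≤ t := interior_subset ht
    have ht0 : 0 < t := by linarith
    have hgrowth := hpf (t • x) (smul_nonneg ht0.le hx)
    have hscale : ∑ j, (t • x) j * gradf (t • x) j = t * ∑ j, gradf (t • x) j * x j := by
      rw [Finset.mul_sum]
      refine Finset.sum_congr rfl fun j _ => ?_
      simp only [Pi.smul_apply, smul_eq_mul]
      ring
    rw [hscale] at hgrowth
    have hsplit : t ^ (-p) = t ^ (-p - 1) * t := by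
      rw [← Real.rpow_add_one ht0.ne', sub_add_cancel]
    have hpos : 0 < t ^ (-p - 1) := Real.rpow_pos_of_pos ht0 _
    rw [hsplit]
    nlinarith [mul_le_mul_of_nonneg_left hgrowth hpos.le]
  have hδ0 : 0 < δ := by linarith
  have hcmp := hanti Set.self_mem_Ici (Set.mem_Ici.mpr hδ) hδ
  simp only [Real.one_rpow, one_mul, one_smul, Real.rpow_neg hδ0.le] at hcmp
  exact (inv_mul_le_iff₀ (Real.rpow_pos_of_pos hδ0 p)).mp hcmp
end

section
/- Bounded growth, part 2 (Fenchel–Young bound): let f : ℝⁿ → ℝ be convex on the nonnegative orthant, monotone on the nonnegative orthant, differentiable, with componentwise non-decreasing gradient (0 ≤ u ≤ v implies ∇f(u) ≤ ∇f(v) componentwise), f(0) = 0, and suppose there is a real p ≥ 1 such that ⟨x, ∇f(x)⟩ ≤ p·f(x) for all componentwise nonnegative x. Then for all componentwise nonnegative x, z ∈ ℝⁿ: ⟨∇f(x), z⟩ − f(z) ≤ ⟨∇f(x), x⟩ − f(x) ≤ (p−1)·f(x); i.e., the Fenchel conjugate of f evaluated at ∇f(x) equals ⟨x, ∇f(x)⟩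 − f(x) and is at most (p−1)·f(x). -/
/-!
The first inequality is the tangent-plane inequality `⟨∇f(x), z - x⟩ ≤ f z - f x` of a convex
function. By convexity, the difference quotients of `t ↦ f (x + t (z - x))` at `0` are at most
`f z - f x` for `0 < t < 1`; their limit as `t ↓ 0` is `⟨∇f(x), z - x⟩` by the chain rule.
The second inequality rearranges the growth hypothesis `⟨x, ∇f(x)⟩ ≤ p f(x)`.
-/

/-- Bounded growth, part 2 (Fenchel–Young bound):
`⟨∇f(x), z⟩ − f(z) ≤ ⟨∇f(x), x⟩ − f(x) ≤ (p−1)·f(x)`. -/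
theorem stmt11 (n : ℕ) (f : (Fin n → ℝ) → ℝ) (gradf : (Fin n → ℝ) → (Fin n → ℝ))
    (hdiff : ∀ x : Fin n → ℝ, HasFDerivAt f
      (∑ j, gradf x j • (ContinuousLinearMap.proj j : (Fin n → ℝ) →L[ℝ] ℝ)) x)
    (hconv : ∀ u v : Fin n → ℝ, 0 ≤ u → 0 ≤ v → ∀ t : ℝ, 0 ≤ t → t ≤ 1 →
      f (t • u + (1 - t) • v) ≤ t * f u + (1 - t) * f v)
    (hmono : ∀ u v : Fin n → ℝ, 0 ≤ u → u ≤ v → f u ≤ f v)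
    (hgradmono : ∀ u v : Fin n → ℝ, 0 ≤ u → u ≤ v → gradf u ≤ gradf v)
    (hf0 : f 0 = 0)
    (p : ℝ) (hp : 1 ≤ p)
    (hpf : ∀ x : Fin n → ℝ, 0 ≤ x → ∑ j, x j * gradf x j ≤ p * f x)
    (x z : Fin n → ℝ) (hx : 0 ≤ x) (hz : 0 ≤ z) :
    (∑ j, gradf x j * z j) - f z ≤ (∑ j, gradf x j * x j) - f x ∧
    (∑ j, gradf x j * x j) - f x ≤ (p - 1) * f x := by
  have hline : HasDerivAt (fun t : ℝ => x + t • (z - x)) (z - x) 0 := by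
    simpa using ((hasDerivAt_id (0 : ℝ)).smul_const (z - x)).const_add x
  have hg : HasDerivAt (fun t : ℝ => f (x + t • (z - x))) (∑ j, gradf x j * (z j - x j)) 0 := by
    have h0 : HasFDerivAt f
        (∑ j, gradf x j • (ContinuousLinearMap.proj j : (Fin n → ℝ) →L[ℝ] ℝ))
        (x + (0 : ℝ) • (z - x)) := by
      simpa using hdiff x
    have h1 := h0.comp_hasDerivAt (0 : ℝ) hline
    simpa [sum_apply, Function.comp_def] using h1
  have hlim := hg.tendsto_slope_zero_right
  have htangent : ∑ j, gradf x j * (z j - x j) ≤ f z - f x := by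
    refine le_of_tendsto hlim ?_
    filter_upwards [Ioo_mem_nhdsGT (zero_lt_one (α := ℝ))] with t ht
    have hc := hconv z x hz hx t ht.1.le ht.2.le
    have he : t • z + (1 - t) • x = x + t • (z - x) := by
      ext j
      simp only [Pi.add_apply, Pi.smul_apply, Pi.sub_apply, smul_eq_mul]
      ring
    rw [he] at hc
    simp only [zero_add, zero_smul, add_zero, smul_eq_mul]
    rw [inv_mul_le_iff₀ ht.1]
    linarith
  have hsplit : ∑ j, gradf x j * (z j - x j)
      = (∑ j, gradf x j * z j) - ∑ j, gradf x j * x j := by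
    simp only [mul_sub, Finset.sum_sub_distrib]
  have hcomm : ∑ j, x j * gradf x j = ∑ j, gradf x j * x j :=
    Finset.sum_congr rfl fun j _ => mul_comm _ _
  have hgrowth := hpf x hx
  constructor <;> linarith
end

section
/- Bounded growth, part 3: let f : ℝⁿ → ℝ be convex on the nonnegative orthant, monotone on the nonnegative orthant, differentiable, with componentwise non-decreasing gradient (0 ≤ u ≤ v implies ∇f(u) ≤ ∇f(v) componentwise), f(0) = 0, and suppose there is a real p > 1 such that ⟨x, ∇f(x)⟩ ≤ p·f(x) for all componentwise nonnegative x. Then for every real γ with 0 < γ ≤ 1 and all componentwise nonnegative x, z ∈ ℝⁿ: γ·⟨∇f(x), z⟩ − f(z) ≤ γ^{p/(p−1)}·(p−1)·f(x); i.e., f*(γ·∇f(x)) ≤ γ^{p/(p−1)}·(p−1)·f(x). -/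
/-!
Euler's inequality `⟨y, ∇f(y)⟩ ≤ p f(y)` says that `s ↦ f(s z) s⁻ᵖ` is nonincreasing, so
`f(z) ≥ s⁻ᵖ f(s z)` for `s ≥ 1` (`radial_growth`). Choose `s = γ^{-1/(p-1)} ≥ 1`, so that
`s⁻ᵖ = γ^{p/(p-1)} =: c` and `γ = c s`. Then
`γ⟨∇f(x), z⟩ - f(z) ≤ c (⟨∇f(x), s z⟩ - f(s z))`, and convexity bounds the bracket by its value
with `x` in place of `s z` (`gradient_ineq`), which by Euler's inequality is at most
`(p - 1) f(x)`.
-/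

/-- The tangent plane at `x` supports `f` from below on the nonnegative orthant. -/
lemma gradient_ineq (n : ℕ) (f : (Fin n → ℝ) → ℝ) (gradf : (Fin n → ℝ) → (Fin n → ℝ))
    (hdiff : ∀ x : Fin n → ℝ, HasFDerivAt f
      (∑ j, gradf x j • (ContinuousLinearMap.proj j : (Fin n → ℝ) →L[ℝ] ℝ)) x)
    (hconv : ∀ u v : Fin n → ℝ, 0 ≤ u → 0 ≤ v → ∀ t : ℝ, 0 ≤ t → t ≤ 1 →
      f (t • u + (1 - t) • v) ≤ t * f u + (1 - t) * f v)
    (x w : Fin n → ℝ) (hx : 0 ≤ x) (hw : 0 ≤ w) :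
    ∑ j, gradf x j * w j - ∑ j, x j * gradf x j ≤ f w - f x := by
  have hl : HasDerivAt (fun t : ℝ => f (x + t • (w - x)))
      (∑ j, gradf x j * w j - ∑ j, x j * gradf x j) 0 := by
    have h1 : HasDerivAt (fun t : ℝ => x + t • (w - x)) (w - x) 0 := by
      simpa using ((hasDerivAt_id (0 : ℝ)).smul_const (w - x)).const_add x
    have h2 := HasFDerivAt.comp_hasDerivAt (f := fun t : ℝ => x + t • (w - x)) (0 : ℝ)
      (by simpa using hdiff x) h1
    refine HasDerivAt.congr_deriv h2 ?_
    simp [mul_sub, Finset.sum_sub_distrib, mul_comm]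
  have hc : ConvexOn ℝ (Set.Icc (0 : ℝ) 1) (fun t : ℝ => f (x + t • (w - x))) := by
    have hpos : ∀ t ∈ Set.Icc (0 : ℝ) 1, 0 ≤ x + t • (w - x) := by
      intro t ht
      have e : x + t • (w - x) = (1 - t) • x + t • w := by module
      rw [e]
      exact add_nonneg (smul_nonneg (by linarith [ht.2]) hx) (smul_nonneg ht.1 hw)
    refine ⟨convex_Icc _ _, fun a ha b hb α β hα hβ hαβ => ?_⟩
    obtain rfl : β = 1 - α := by linarith
    have := hconv _ _ (hpos a ha) (hpos b hb) α hα (by linarith)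
    have e : x + (α * a + (1 - α) * b) • (w - x)
        = α • (x + a • (w - x)) + (1 - α) • (x + b • (w - x)) := by module
    simpa only [smul_eq_mul, e] using this
  have := hc.le_slope_of_hasDerivAt (x := 0) (y := 1) (by simp) (by simp) one_pos hl
  simpa [slope_def_field] using this

/-- `p`-homogeneous growth along rays, obtained by integrating Euler's inequality. -/
lemma radial_growth (n : ℕ) (f : (Fin n → ℝ) → ℝ) (gradf : (Fin n → ℝ) → (Fin n → ℝ))
    (hdiff : ∀ x : Fin n → ℝ, HasFDerivAt f
      (∑ j, gradf x j • (ContinuousLinearMap.proj j : (Fin n → ℝ) →L[ℝ] ℝ)) x)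
    (p : ℝ) (hpf : ∀ x : Fin n → ℝ, 0 ≤ x → ∑ j, x j * gradf x j ≤ p * f x)
    (z : Fin n → ℝ) (hz : 0 ≤ z) (s : ℝ) (hs : 1 ≤ s) :
    f (s • z) * s ^ (-p) ≤ f z := by
  have hd : ∀ t : ℝ, 0 < t → HasDerivAt (fun t : ℝ => f (t • z) * t ^ (-p))
      ((∑ j, gradf (t • z) j * z j) * t ^ (-p) + f (t • z) * (-p * t ^ (-p - 1))) t := by
    intro t ht
    have h1 : HasDerivAt (fun t : ℝ => t • z) z t := by
      simpa using (hasDerivAt_id t).smul_const z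
    have h2 := (hdiff (t • z)).comp_hasDerivAt t h1
    have h3 := h2.mul (Real.hasDerivAt_rpow_const (p := -p) (Or.inl ht.ne'))
    refine HasDerivAt.congr_deriv h3 ?_
    simp
  have hanti : AntitoneOn (fun t : ℝ => f (t • z) * t ^ (-p)) (Set.Ici 1) := by
    refine antitoneOn_of_deriv_nonpos (convex_Ici 1) ?_ ?_ ?_
    · intro t ht
      exact (hd t (one_pos.trans_le ht)).continuousAt.continuousWithinAt
    · intro t ht
      rw [interior_Ici] at ht
      exact (hd t (one_pos.trans ht)).differentiableAt.differentiableWithinAt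
    · intro t ht
      rw [interior_Ici] at ht
      have ht0 : 0 < t := one_pos.trans ht
      rw [(hd t ht0).deriv]
      have hE := hpf (t • z) (smul_nonneg ht0.le hz)
      have e : ∑ j, (t • z) j * gradf (t • z) j = t * ∑ j, gradf (t • z) j * z j := by
        rw [Finset.mul_sum]
        refine Finset.sum_congr rfl fun j _ => ?_
        simp only [Pi.smul_apply, smul_eq_mul]
        ring
      rw [e] at hE
      have hpow : t ^ (-p) = t ^ (-p - 1) * t := by
        rw [← Real.rpow_add_one ht0.ne']
        ring_nf
      rw [hpow]
      have := mul_le_mul_of_nonneg_left hE (Real.rpow_nonneg ht0.le (-p - 1))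
      linarith
  simpa using hanti (Set.mem_Ici.2 le_rfl) (Set.mem_Ici.2 hs) hs


/-- Bounded growth, part 3: for `p > 1` and `0 < γ ≤ 1`,
`γ·⟨∇f(x), z⟩ − f(z) ≤ γ^{p/(p−1)}·(p−1)·f(x)`, i.e.
`f*(γ·∇f(x)) ≤ γ^{p/(p−1)}·(p−1)·f(x)`. -/
theorem stmt12 (n : ℕ) (f : (Fin n → ℝ) → ℝ) (gradf : (Fin n → ℝ) → (Fin n → ℝ))
    (hdiff : ∀ x : Fin n → ℝ, HasFDerivAt f
      (∑ j, gradf x j • (ContinuousLinearMap.proj j : (Fin n → ℝ) →L[ℝ] ℝ)) x)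
    (hconv : ∀ u v : Fin n → ℝ, 0 ≤ u → 0 ≤ v → ∀ t : ℝ, 0 ≤ t → t ≤ 1 →
      f (t • u + (1 - t) • v) ≤ t * f u + (1 - t) * f v)
    (hmono : ∀ u v : Fin n → ℝ, 0 ≤ u → u ≤ v → f u ≤ f v)
    (hgradmono : ∀ u v : Fin n → ℝ, 0 ≤ u → u ≤ v → gradf u ≤ gradf v)
    (hf0 : f 0 = 0)
    (p : ℝ) (hp : 1 < p)
    (hpf : ∀ x : Fin n → ℝ, 0 ≤ x → ∑ j, x j * gradf x j ≤ p * f x)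
    (γ : ℝ) (hγ0 : 0 < γ) (hγ1 : γ ≤ 1)
    (x z : Fin n → ℝ) (hx : 0 ≤ x) (hz : 0 ≤ z) :
    γ * (∑ j, gradf x j * z j) - f z ≤ γ ^ (p / (p - 1)) * (p - 1) * f x := by
  have hp1 : 0 < p - 1 := by linarith
  set s : ℝ := γ ^ (-1 / (p - 1)) with hs
  set c : ℝ := γ ^ (p / (p - 1)) with hc
  have hs1 : 1 ≤ s := Real.one_le_rpow_of_pos_of_le_one_of_nonpos hγ0 hγ1
    (div_nonpos_of_nonpos_of_nonneg (by norm_num) hp1.le)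
  have hsc : s ^ (-p) = c := by
    rw [hs, hc, ← Real.rpow_mul hγ0.le]
    congr 1
    ring
  have hcs : c * s = γ := by
    rw [hs, hc, ← Real.rpow_add hγ0, ← add_div, ← sub_eq_add_neg, div_self hp1.ne',
      Real.rpow_one]
  have hc0 : 0 ≤ c := Real.rpow_nonneg hγ0.le _
  have h1 := radial_growth n f gradf hdiff p hpf z hz s hs1
  have h2 := gradient_ineq n f gradf hdiff hconv x (s • z) hx
    (smul_nonneg (zero_le_one.trans hs1) hz)
  have h3 := hpf x hx
  have e : ∑ j, gradf x j * (s • z) j = s * ∑ j, gradf x j * z j := by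
    rw [Finset.mul_sum]
    refine Finset.sum_congr rfl fun j _ => ?_
    simp only [Pi.smul_apply, smul_eq_mul]
    ring
  rw [e] at h2
  rw [hsc] at h1
  have h4 : s * ∑ j, gradf x j * z j - f (s • z) ≤ (p - 1) * f x := by linarith
  have h5 := mul_le_mul_of_nonneg_left h4 hc0
  rw [← hcs]
  linarith
end

section
/- Bounded growth, part 4: let f : ℝⁿ → ℝ be convex on the nonnegative orthant, monotone on the nonnegative orthant, differentiable, with componentwise non-decreasing gradient (0 ≤ u ≤ v implies ∇f(u) ≤ ∇f(v) componentwise), f(0) = 0, and suppose ⟨x, ∇f(x)⟩ ≤ f(x) for all componentwise nonnegative x (the case p = 1). Then for every real γ with 0 < γ ≤ 1 and all componentwise nonnegative x, z ∈ ℝⁿ: γ·⟨∇f(x), z⟩ − f(z) ≤ 0; i.e., f*(γ·∇f(x)) ≤ 0. -/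
/-! The gradient inequality for a convex function gives
`f z ≥ f x + ⟨∇f(x), z - x⟩`, and `⟨x, ∇f(x)⟩ ≤ f x` turns the right-hand side into something
at least `⟨∇f(x), z⟩`. Since `f z ≥ f 0 = 0`, multiplying by `γ ∈ (0, 1]` preserves the bound. -/

/-- Bounded growth, part 4 (the case `p = 1`): for `0 < γ ≤ 1`,
`γ·⟨∇f(x), z⟩ − f(z) ≤ 0`, i.e. `f*(γ·∇f(x)) ≤ 0`. -/
theorem stmt13 (n : ℕ) (f : (Fin n → ℝ) → ℝ) (gradf : (Fin n → ℝ) → (Fin n → ℝ))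
    (hdiff : ∀ x : Fin n → ℝ, HasFDerivAt f
      (∑ j, gradf x j • (ContinuousLinearMap.proj j : (Fin n → ℝ) →L[ℝ] ℝ)) x)
    (hconv : ∀ u v : Fin n → ℝ, 0 ≤ u → 0 ≤ v → ∀ t : ℝ, 0 ≤ t → t ≤ 1 →
      f (t • u + (1 - t) • v) ≤ t * f u + (1 - t) * f v)
    (hmono : ∀ u v : Fin n → ℝ, 0 ≤ u → u ≤ v → f u ≤ f v)
    (hgradmono : ∀ u v : Fin n → ℝ, 0 ≤ u → u ≤ v → gradf u ≤ gradf v)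
    (hf0 : f 0 = 0)
    (hpf : ∀ x : Fin n → ℝ, 0 ≤ x → ∑ j, x j * gradf x j ≤ f x)
    (γ : ℝ) (hγ0 : 0 < γ) (hγ1 : γ ≤ 1)
    (x z : Fin n → ℝ) (hx : 0 ≤ x) (hz : 0 ≤ z) :
    γ * (∑ j, gradf x j * z j) - f z ≤ 0 := by
  have hfz : 0 ≤ f z := hf0 ▸ hmono 0 z le_rfl hz
  have hgrad : ∑ j, gradf x j * (z j - x j) ≤ f z - f x := by
    have hline : HasDerivAt (fun t : ℝ => x + t • (z - x)) (z - x) 0 := by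
      simpa using ((hasDerivAt_id (0 : ℝ)).smul_const (z - x)).const_add x
    have hcomp : HasDerivAt (fun t : ℝ => f (x + t • (z - x)))
        (∑ j, gradf x j * (z j - x j)) 0 := by
      have h := HasFDerivAt.comp_hasDerivAt_of_eq (0 : ℝ) (hdiff x) hline (by simp)
      simpa [Function.comp_def] using h
    -- By convexity the difference quotients along the segment are at most `f z - f x`.
    refine le_of_tendsto hcomp.tendsto_slope_zero_right ?_
    filter_upwards [Ioc_mem_nhdsGT (zero_lt_one' ℝ)] with t ht
    have hc := hconv z x hz hx t ht.1.le ht.2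
    have hpt : t • z + (1 - t) • x = x + t • (z - x) := by module
    rw [hpt] at hc
    simp only [zero_add, zero_smul, add_zero, smul_eq_mul]
    rw [inv_mul_le_iff₀ ht.1]
    linarith
  have hsplit : ∑ j, gradf x j * (z j - x j)
      = ∑ j, gradf x j * z j - ∑ j, x j * gradf x j := by
    rw [← Finset.sum_sub_distrib]
    exact Finset.sum_congr rfl fun j _ => by ring
  have hS : ∑ j, gradf x j * z j ≤ f z := by linarith [hpf x hx]
  nlinarith [mul_le_mul_of_nonneg_left hS hγ0.le, mul_nonneg (sub_nonneg.2 hγ1) hfz]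
end

section
/- Phase sum bound: let q > 1 be real, p := q/(q−1), c > 0 and Φ₀ > 0 reals, k a natural number, and let s, t : {1,…,k} → ℝ satisfy 0 ≤ s_j ≤ t_j for all j. Then Σ_{j=1}^k ( c·(t_j^{q−1} − s_j^{q−1}) / ((q−1)·Φ₀^{1−1/q}) )^p ≤ c^p·(Σ_{j=1}^k t_j^q − Σ_{j=1}^k s_j^q) / ((q−1)^p·Φ₀). -/
/-! Each summand is bounded separately. Since `x ↦ x ^ p` is superadditive on `[0, ∞)` for `p ≥ 1`,
`(t ^ (q - 1) - s ^ (q - 1)) ^ p ≤ t ^ ((q - 1) * p) - s ^ ((q - 1) * p) = t ^ q - s ^ q`, while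
`(Φ₀ ^ (1 - 1 / q)) ^ p = Φ₀` because `(1 - 1 / q) * p = 1`. -/

theorem sub_rpow_conj_le {q : ℝ} (hq : 1 < q) {s t : ℝ} (hs : 0 ≤ s) (hst : s ≤ t) :
    (t ^ (q - 1) - s ^ (q - 1)) ^ (q / (q - 1)) ≤ t ^ q - s ^ q := by
  have hq1 : 0 < q - 1 := sub_pos.2 hq
  have hp : 1 ≤ q / (q - 1) := by rw [le_div_iff₀ hq1]; linarith
  have hmul : (q - 1) * (q / (q - 1)) = q := mul_div_cancel₀ q hq1.ne'
  have hmono : s ^ (q - 1) ≤ t ^ (q - 1) := Real.rpow_le_rpow hs hst hq1.le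
  have h := Real.add_rpow_le_rpow_add (sub_nonneg.2 hmono) (Real.rpow_nonneg hs (q - 1)) hp
  rw [sub_add_cancel, ← Real.rpow_mul hs, ← Real.rpow_mul (hs.trans hst), hmul] at h
  linarith

/-- Phase sum bound for the ℓ_q analysis: with `p = q/(q−1)`,
`Σ_j (c·(t_j^{q−1} − s_j^{q−1})/((q−1)·Φ₀^{1−1/q}))^p
  ≤ c^p·(Σ_j t_j^q − Σ_j s_j^q)/((q−1)^p·Φ₀)`. -/
theorem stmt14 (q : ℝ) (hq : 1 < q) (c Φ₀ : ℝ) (hc : 0 < c) (hΦ : 0 < Φ₀)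
    (k : ℕ) (s t : Fin k → ℝ) (hs : ∀ j, 0 ≤ s j) (hst : ∀ j, s j ≤ t j) :
    ∑ j, (c * (t j ^ (q - 1) - s j ^ (q - 1)) / ((q - 1) * Φ₀ ^ (1 - 1 / q)))
          ^ (q / (q - 1))
      ≤ c ^ (q / (q - 1)) * ((∑ j, t j ^ q) - ∑ j, s j ^ q) /
          ((q - 1) ^ (q / (q - 1)) * Φ₀) := by
  have hq1 : 0 < q - 1 := sub_pos.2 hq
  have hq0 : q ≠ 0 := by linarith
  have hΦp : (Φ₀ ^ (1 - 1 / q)) ^ (q / (q - 1)) = Φ₀ := by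
    have he : (1 - 1 / q) * (q / (q - 1)) = 1 := by
      have := hq1.ne'
      field_simp
    rw [← Real.rpow_mul hΦ.le, he, Real.rpow_one]
  rw [← Finset.sum_sub_distrib, Finset.mul_sum, Finset.sum_div]
  refine Finset.sum_le_sum fun j _ => ?_
  have hd : 0 ≤ t j ^ (q - 1) - s j ^ (q - 1) :=
    sub_nonneg.2 (Real.rpow_le_rpow (hs j) (hst j) hq1.le)
  rw [Real.div_rpow (by positivity) (by positivity), Real.mul_rpow hc.le hd,
    Real.mul_rpow hq1.le (by positivity), hΦp]
  gcongr
  exact sub_rpow_conj_le hq (hs j) (hst j)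
end

section
/- Choice of θ for 1 < q < 2: let q be a real with 1 < q < 2, let p := q/(q−1), ε := −1/log(q−1) (natural logarithm; note 0 < q−1 < 1 so ε > 0), and θ := 1 + (q−1)^{−ε·p}. Then 3q·(θ−1)^{1/p} / ((q−1)·log θ) ≤ 9. -/
/-! Since `(q-1)^{-ε} = e`, the choice of `θ` amounts to `θ - 1 = e^p`. Hence `(θ-1)^{1/p} = e` and
`log θ ≥ p`, so, using `(q-1)p = q`, the quotient is at most `3qe/((q-1)p) = 3e ≤ 9`. -/

/-- Choice of `θ` for `1 < q < 2`: with `p = q/(q−1)`, `ε = −1/log(q−1)`, and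
`θ = 1 + (q−1)^{−εp}`, it holds that `3q·(θ−1)^{1/p}/((q−1)·log θ) ≤ 9`. -/
theorem stmt17 (q p ε θ : ℝ) (hq1 : 1 < q) (hq2 : q < 2)
    (hp : p = q / (q - 1)) (hε : ε = -1 / Real.log (q - 1))
    (hθ : θ = 1 + (q - 1) ^ (-(ε * p))) :
    3 * q * (θ - 1) ^ (1 / p) / ((q - 1) * Real.log θ) ≤ 9 := by
  have hq0 : 0 < q - 1 := by linarith
  have hlog : Real.log (q - 1) < 0 := Real.log_neg hq0 (by linarith)
  have hp0 : 0 < p := by rw [hp]; positivity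
  have hpq : (q - 1) * p = q := by rw [hp]; field_simp
  have hpow : (q - 1) ^ (-(ε * p)) = Real.exp p := by
    rw [Real.rpow_def_of_pos hq0, hε]
    congr 1
    have hlog0 := hlog.ne
    field_simp
  have hroot : (θ - 1) ^ (1 / p) = Real.exp 1 := by
    rw [hθ, hpow, add_sub_cancel_left, ← Real.exp_mul, mul_one_div_cancel hp0.ne']
  have hL : p ≤ Real.log θ := by
    rw [hθ, hpow, Real.le_log_iff_exp_le (by positivity)]
    linarith
  have hqL : q ≤ (q - 1) * Real.log θ := by
    calc q = (q - 1) * p := hpq.symm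
      _ ≤ (q - 1) * Real.log θ := by gcongr
  rw [hroot, div_le_iff₀ (by linarith)]
  have he : Real.exp 1 ≤ 3 := Real.exp_one_lt_three.le
  calc 3 * q * Real.exp 1 ≤ 3 * q * 3 := by gcongr
    _ ≤ 9 * ((q - 1) * Real.log θ) := by linarith
end
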